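/- arXiv:2209.11501 — 6 statements merged into one kernel-verified Lean document; each statement's English description precedes it below -/
import Mathlib

section
/- Let L ≥ 1 be an integer, ξ ≥ 0, and z ≥ 0. Then (1/(2^L Γ(L))) · ∫₀^z x^{L-1} e^{-x/2} · (Σ_{i=0}^∞ (ξ x/2)^i / ((L)_i · i!)) dx = Σ_{i=0}^∞ (ξ^i / i!) · γ(L+i, z/2)/Γ(L+i), where (L)_i = L(L+1)⋯(L+i−1) denotes the Pochhammer symbol (with (L)_0 = 1). -/
/-- The lower incomplete gamma function `γ(s, x) = ∫₀^x t^{s-1} e^{-t} dt`. -/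
noncomputable def lincGamma (s x : ℝ) : ℝ :=
  ∫ t in (0:ℝ)..x, t ^ (s - 1) * Real.exp (-t)

/-- `Γ(L+i) = Γ(L) (L)_i`. -/
lemma gamma_add_nat_poch (s : ℝ) (hs : 0 < s) (i : ℕ) :
    Real.Gamma (s + i) = Real.Gamma s * (ascPochhammer ℝ i).eval s := by
  induction i with
  | zero => simp
  | succ k ih =>
    have : s + (k : ℝ) ≠ 0 := by positivity
    rw [ascPochhammer_succ_eval, Nat.cast_succ, ← add_assoc, Real.Gamma_add_one this, ih]
    ring

lemma one_le_poch (s : ℝ) (hs : 1 ≤ s) (i : ℕ) : 1 ≤ (ascPochhammer ℝ i).eval s := by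
  induction i with
  | zero => simp
  | succ k ih =>
    rw [ascPochhammer_succ_eval]
    have : (0 : ℝ) ≤ k := by positivity
    exact one_le_mul_of_one_le_of_one_le ih (by linarith)

/-- The key integration step in the Appendix proof of Theorem 2: integrating the
non-central χ² density with `2L` degrees of freedom term by term gives the CDF series.
Here `(L)_i` is the Pochhammer symbol `L(L+1)⋯(L+i−1)`. -/
theorem noncentral_chi_sq_integral (L : ℕ) (hL : 1 ≤ L) (ξ : ℝ) (hξ : 0 ≤ ξ)
    (z : ℝ) (hz : 0 ≤ z) :
    (1 / (2 ^ L * Real.Gamma L)) *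
        ∫ x in (0:ℝ)..z, x ^ ((L : ℝ) - 1) * Real.exp (-x / 2) *
          ∑' i : ℕ, (ξ * x / 2) ^ i / ((ascPochhammer ℝ i).eval (L : ℝ) * Nat.factorial i)
      = ∑' i : ℕ, ξ ^ i / (Nat.factorial i) * (lincGamma (L + i) (z / 2) / Real.Gamma (L + i)) := by
  obtain ⟨n, rfl⟩ : ∃ n, L = n + 1 := ⟨L - 1, by omega⟩
  have hL1 : (1 : ℝ) ≤ ((n + 1 : ℕ) : ℝ) := by exact_mod_cast hL
  have hP := one_le_poch _ hL1
  have hG := gamma_add_nat_poch _ (lt_of_lt_of_le one_pos hL1)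
  have hΓ : 0 < Real.Gamma ((n + 1 : ℕ) : ℝ) :=
    Real.Gamma_pos_of_pos (lt_of_lt_of_le one_pos hL1)
  have hpow : ∀ x : ℝ, x ^ (((n + 1 : ℕ) : ℝ) - 1) = x ^ n := by
    intro x
    rw [← Real.rpow_natCast]; congr 1; push_cast; ring
  have hlinc : ∀ i : ℕ, lincGamma (((n + 1 : ℕ) : ℝ) + i) (z / 2)
      = ∫ t in (0:ℝ)..(z / 2), t ^ (n + i) * Real.exp (-t) := by
    intro i
    unfold lincGamma
    congr 1; ext t
    rw [← Real.rpow_natCast]; congr 2; push_cast; ring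
  simp only [hpow, hlinc, hG]
  generalize ((n + 1 : ℕ) : ℝ) = s at *
  have hb : ∀ (i : ℕ) (x : ℝ), 0 ≤ x → x ≤ z →
      (ξ * x / 2) ^ i / ((ascPochhammer ℝ i).eval s * Nat.factorial i)
        ≤ (ξ * z / 2) ^ i / Nat.factorial i := by
    intro i x hx hxz
    have h1 : (0 : ℝ) < Nat.factorial i := by positivity
    gcongr
    nlinarith [hP i]
  have hnn : ∀ (i : ℕ) (x : ℝ), 0 ≤ x →
      0 ≤ (ξ * x / 2) ^ i / ((ascPochhammer ℝ i).eval s * Nat.factorial i) := by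
    intro i x hx
    have := hP i
    positivity
  have hsum : Summable fun i : ℕ => (ξ * z / 2) ^ i / (Nat.factorial i : ℝ) :=
    Real.summable_pow_div_factorial _
  have key : HasSum (fun i : ℕ => ∫ x in (0:ℝ)..z, x ^ n * Real.exp (-x / 2) *
        ((ξ * x / 2) ^ i / ((ascPochhammer ℝ i).eval s * Nat.factorial i)))
      (∫ x in (0:ℝ)..z, x ^ n * Real.exp (-x / 2) *
        ∑' i : ℕ, (ξ * x / 2) ^ i / ((ascPochhammer ℝ i).eval s * Nat.factorial i)) := by
    apply intervalIntegral.hasSum_integral_of_dominated_convergence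
      (fun i _ => z ^ n * ((ξ * z / 2) ^ i / (Nat.factorial i : ℝ)))
    · intro i
      apply Continuous.aestronglyMeasurable
      fun_prop
    · intro i
      refine Filter.Eventually.of_forall fun x hx => ?_
      rw [Set.uIoc_of_le hz] at hx
      have h0 := hnn i x hx.1.le
      have hx0 := hx.1.le
      rw [Real.norm_of_nonneg (by positivity)]
      have he : Real.exp (-x / 2) ≤ 1 := Real.exp_le_one_iff.2 (by linarith)
      have h2 : x ^ n * Real.exp (-x / 2) ≤ z ^ n := by
        have := pow_le_pow_left₀ hx0 hx.2 n
        have h3 : 0 ≤ x ^ n := by positivity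
        nlinarith
      exact mul_le_mul h2 (hb i x hx0 hx.2) h0 (by positivity)
    · exact Filter.Eventually.of_forall fun x _ => hsum.mul_left _
    · exact intervalIntegrable_const
    · refine Filter.Eventually.of_forall fun x hx => ?_
      rw [Set.uIoc_of_le hz] at hx
      exact (Summable.of_nonneg_of_le (fun i => hnn i x hx.1.le)
        (fun i => hb i x hx.1.le hx.2) hsum).hasSum.mul_left _
  rw [← key.tsum_eq, ← tsum_mul_left]
  congr 1; ext i
  have hPi : 0 < (ascPochhammer ℝ i).eval s := lt_of_lt_of_le one_pos (hP i)
  have hf : (0 : ℝ) < Nat.factorial i := by positivity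
  have hc := intervalIntegral.integral_comp_div (a := 0) (b := z)
    (fun t : ℝ => t ^ (n + i) * Real.exp (-t)) (two_ne_zero (α := ℝ))
  rw [zero_div, smul_eq_mul] at hc
  have hI : (∫ x in (0:ℝ)..z, x ^ n * Real.exp (-x / 2) *
        ((ξ * x / 2) ^ i / ((ascPochhammer ℝ i).eval s * Nat.factorial i)))
      = (2 ^ n * ξ ^ i / ((ascPochhammer ℝ i).eval s * Nat.factorial i)) *
        ∫ x in (0:ℝ)..z, (x / 2) ^ (n + i) * Real.exp (-(x / 2)) := by
    rw [← intervalIntegral.integral_const_mul]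
    congr 1; ext x
    rw [neg_div, pow_add, div_pow x 2 n, mul_div_assoc ξ x 2, mul_pow ξ]
    field_simp
  rw [hI, hc]
  field_simp
  ring
end

section
/- Let a ≥ 0, b > 0, and let L ≥ 1 be an integer. Define F(t) = e^{-a} · Σ_{i=0}^∞ (a^i/i!) · γ(1+i, t/b)/Γ(1+i) for t ≥ 0. Then lim_{ψ → 0⁺} ψ^{-L} · (F(ψ))^L = e^{-La}/b^L. -/
open Filter

lemma lincGamma_nat (i : ℕ) (v : ℝ) :
    lincGamma (1 + i) v = ∫ t in (0:ℝ)..v, t ^ i * Real.exp (-t) := by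
  unfold lincGamma
  simp only [add_sub_cancel_left, Real.rpow_natCast]

lemma lincGamma_le (i : ℕ) (v : ℝ) (hv : 0 ≤ v) :
    lincGamma (1 + i) v ≤ v ^ (i + 1) / (i + 1) := by
  rw [lincGamma_nat]
  have h : ∫ t in (0:ℝ)..v, t ^ i = v ^ (i + 1) / (i + 1) := by
    rw [integral_pow]; simp
  rw [← h]
  apply intervalIntegral.integral_mono_on hv
  · exact Continuous.intervalIntegrable (by fun_prop) _ _
  · exact Continuous.intervalIntegrable (by fun_prop) _ _
  · intro t ht
    have : Real.exp (-t) ≤ 1 := Real.exp_le_one_iff.2 (by linarith [ht.1])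
    exact mul_le_of_le_one_right (pow_nonneg ht.1 _) this

lemma le_lincGamma (i : ℕ) (v : ℝ) (hv : 0 ≤ v) :
    v ^ (i + 1) / (i + 1) * Real.exp (-v) ≤ lincGamma (1 + i) v := by
  rw [lincGamma_nat]
  have h : ∫ t in (0:ℝ)..v, t ^ i * Real.exp (-v) = v ^ (i + 1) / (i + 1) * Real.exp (-v) := by
    rw [intervalIntegral.integral_mul_const, integral_pow]; simp
  rw [← h]
  apply intervalIntegral.integral_mono_on hv
  · exact Continuous.intervalIntegrable (by fun_prop) _ _
  · exact Continuous.intervalIntegrable (by fun_prop) _ _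
  · intro t ht
    exact mul_le_mul_of_nonneg_left (Real.exp_le_exp.2 (by linarith [ht.2])) (pow_nonneg ht.1 _)

lemma ratio_upper (b : ℝ) (hb : 0 < b) (i : ℕ) (x : ℝ) (hx : 0 < x) :
    lincGamma (1 + i) (x / b) / x ≤ (x / b) ^ i / (i + 1) / b := by
  rw [div_le_iff₀ hx]
  refine (lincGamma_le i (x / b) (by positivity)).trans (le_of_eq ?_)
  rw [pow_succ]; field_simp

lemma ratio_lower (b : ℝ) (hb : 0 < b) (i : ℕ) (x : ℝ) (hx : 0 < x) :
    (x / b) ^ i / (i + 1) / b * Real.exp (-(x / b)) ≤ lincGamma (1 + i) (x / b) / x := by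
  rw [le_div_iff₀ hx]
  refine le_trans (le_of_eq ?_) (le_lincGamma i (x / b) (by positivity))
  rw [pow_succ]; field_simp

lemma ratio_tendsto (b : ℝ) (hb : 0 < b) (i : ℕ) :
    Tendsto (fun x : ℝ => lincGamma (1 + i) (x / b) / x) (nhdsWithin 0 (Set.Ioi 0))
      (nhds ((0:ℝ) ^ i / (i + 1) / b)) := by
  have h1 : Tendsto (fun x : ℝ => (x / b) ^ i / (i + 1) / b) (nhdsWithin 0 (Set.Ioi 0))
      (nhds ((0:ℝ) ^ i / (i + 1) / b)) := by
    have : Continuous (fun x : ℝ => (x / b) ^ i / (i + 1) / b) := by fun_prop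
    have h := this.tendsto 0
    simp only [zero_div] at h
    exact h.mono_left nhdsWithin_le_nhds
  have h2 : Tendsto (fun x : ℝ => (x / b) ^ i / (i + 1) / b * Real.exp (-(x / b)))
      (nhdsWithin 0 (Set.Ioi 0)) (nhds ((0:ℝ) ^ i / (i + 1) / b)) := by
    have : Continuous (fun x : ℝ => (x / b) ^ i / (i + 1) / b * Real.exp (-(x / b))) := by
      fun_prop
    have h := this.tendsto 0
    simp only [zero_div, neg_zero, Real.exp_zero, mul_one] at h
    exact h.mono_left nhdsWithin_le_nhds
  refine tendsto_of_tendsto_of_tendsto_of_le_of_le' h2 h1 ?_ ?_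
  · filter_upwards [self_mem_nhdsWithin] with x hx using ratio_lower b hb i x hx
  · filter_upwards [self_mem_nhdsWithin] with x hx using ratio_upper b hb i x hx

lemma series_tendsto (a b : ℝ) (ha : 0 ≤ a) (hb : 0 < b) :
    Tendsto (fun x : ℝ => ∑' i : ℕ, a ^ i / (Nat.factorial i) *
      (lincGamma (1 + i) (x / b) / x / Real.Gamma (1 + i))) (nhdsWithin 0 (Set.Ioi 0))
      (nhds (1 / b)) := by
  have key : ∑' i : ℕ, a ^ i / (Nat.factorial i) *
      ((0:ℝ) ^ i / (i + 1) / b / Real.Gamma (1 + i)) = 1 / b := by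
    rw [tsum_eq_single 0]
    · simp
    · intro i hi
      simp [hi]
  rw [← key]
  refine tendsto_tsum_of_dominated_convergence
    (bound := fun i : ℕ => a ^ i / (Nat.factorial i) * (1 / b)) ?_ ?_ ?_
  · exact (Real.summable_pow_div_factorial a).mul_right _
  · intro i
    exact ((ratio_tendsto b hb i).div_const _).const_mul _
  · have hmem : Set.Ioo (0:ℝ) b ∈ nhdsWithin (0:ℝ) (Set.Ioi 0) := Ioo_mem_nhdsGT hb
    filter_upwards [hmem] with x hx i
    have hx0 : 0 < x := hx.1
    have hl : 0 ≤ lincGamma (1 + i) (x / b) / x :=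
      le_trans (by positivity) (ratio_lower b hb i x hx0)
    have hG : Real.Gamma (1 + i) = (Nat.factorial i : ℝ) := by
      rw [add_comm]; exact Real.Gamma_nat_eq_factorial i
    have hG1 : (1:ℝ) ≤ Nat.factorial i := by exact_mod_cast Nat.one_le_iff_ne_zero.2 i.factorial_ne_zero
    rw [hG, Real.norm_of_nonneg (by positivity)]
    refine mul_le_mul_of_nonneg_left ?_ (by positivity)
    refine (div_le_self hl hG1).trans ((ratio_upper b hb i x hx0).trans ?_)
    refine div_le_div_of_nonneg_right ?_ hb.le
    have hp : (x / b) ^ i ≤ 1 := pow_le_one₀ (by positivity) ((div_le_one hb).2 hx.2.le)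
    refine (div_le_self (by positivity) ?_).trans hp
    have : (0:ℝ) ≤ i := Nat.cast_nonneg i
    linarith

/-- Asymptotic outage probability of Type-I HARQ: with per-round outage probability
`F(ψ) = e^{-a} ∑_{i=0}^∞ (a^i/i!) γ(1+i, ψ/b)/Γ(1+i)`, one has
`ψ^{-L} (F(ψ))^L → e^{-La}/b^L` as `ψ → 0⁺`. -/
theorem typeI_asymptotic_outage (a b : ℝ) (ha : 0 ≤ a) (hb : 0 < b)
    (L : ℕ) (hL : 1 ≤ L)
    (F : ℝ → ℝ)
    (hF : ∀ t, 0 ≤ t → F t = Real.exp (-a) *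
      ∑' i : ℕ, a ^ i / (Nat.factorial i) * (lincGamma (1 + i) (t / b) / Real.Gamma (1 + i))) :
    Tendsto (fun ψ : ℝ => ψ ^ (-(L : ℤ)) * (F ψ) ^ L)
      (nhdsWithin 0 (Set.Ioi 0)) (nhds (Real.exp (-(L * a)) / b ^ L)) := by
  have h := (((series_tendsto a b ha hb).const_mul (Real.exp (-a))).pow L)
  have e : Real.exp (-(L * a)) / b ^ L = (Real.exp (-a) * (1 / b)) ^ L := by
    rw [mul_pow, ← Real.exp_nat_mul, one_div, inv_pow, mul_neg, div_eq_mul_inv]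
  rw [e]
  refine h.congr' ?_
  filter_upwards [self_mem_nhdsWithin] with x hx
  have hx0 : (0:ℝ) < x := hx
  rw [hF x hx0.le, zpow_neg, zpow_natCast, ← inv_pow, ← mul_pow, mul_left_comm]
  congr 2
  rw [← tsum_mul_left]
  refine tsum_congr fun i => ?_
  ring
end

section
/- Let ξ ≥ 0, b > 0, R > 0, and let L ≥ 1 be an integer. Define the HARQ-CC outage probability P(ρ) = e^{-ξ} · Σ_{i=0}^∞ (ξ^i/i!) · γ(L+i, (2^R−1)/(ρb))/Γ(L+i) for ρ > 0. Then the diversity order equals L, i.e., lim_{ρ → ∞} (− log P(ρ) / log ρ) = L. -/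
open Filter

lemma lincGamma_bounds (n : ℕ) (v : ℝ) (hn : 1 ≤ n) (hv : 0 < v) (hv1 : v ≤ 1) :
    Real.exp (-1) * v ^ n / n ≤ lincGamma n v ∧ lincGamma n v ≤ v ^ n / n := by
  have hn' : (1:ℝ) ≤ n := by exact_mod_cast hn
  have hs : (0:ℝ) ≤ (n:ℝ) - 1 := by linarith
  have hc : Continuous (fun t : ℝ => t ^ ((n:ℝ) - 1)) :=
    Real.continuous_rpow_const hs
  have hI : ∫ t in (0:ℝ)..v, t ^ ((n:ℝ) - 1) = v ^ n / n := by
    rw [integral_rpow (Or.inl (by linarith))]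
    have h0 : (0:ℝ) ^ (n:ℝ) = 0 := Real.zero_rpow (by linarith)
    simp only [sub_add_cancel, h0, sub_zero, Real.rpow_natCast]
  have hc2 : Continuous (fun t : ℝ => t ^ ((n:ℝ) - 1) * Real.exp (-t)) :=
    hc.mul (by fun_prop)
  unfold lincGamma
  constructor
  · rw [mul_div_assoc, ← hI, ← intervalIntegral.integral_const_mul]
    apply intervalIntegral.integral_mono_on hv.le
      ((continuous_const.mul hc).intervalIntegrable _ _) (hc2.intervalIntegrable _ _)
    intro t ht
    rw [mul_comm]
    apply mul_le_mul_of_nonneg_left _ (Real.rpow_nonneg ht.1 _)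
    apply Real.exp_le_exp.mpr
    linarith [ht.2]
  · rw [← hI]
    apply intervalIntegral.integral_mono_on hv.le
      (hc2.intervalIntegrable _ _) (hc.intervalIntegrable _ _)
    intro t ht
    apply mul_le_of_le_one_right (Real.rpow_nonneg ht.1 _)
    apply Real.exp_le_one_iff.mpr
    linarith [ht.1]

lemma sum_bounds (ξ v : ℝ) (hξ : 0 ≤ ξ) (L : ℕ) (hL : 1 ≤ L) (hv : 0 < v) (hv1 : v ≤ 1) :
    Real.exp (-1) / L / Real.Gamma L * v ^ L ≤ ∑' i : ℕ, ξ ^ i / (Nat.factorial i) *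
        (lincGamma (L + i) v / Real.Gamma (L + i)) ∧
    ∑' i : ℕ, ξ ^ i / (Nat.factorial i) *
        (lincGamma (L + i) v / Real.Gamma (L + i)) ≤ Real.exp ξ * v ^ L := by
  have key : ∀ i : ℕ, 0 ≤ ξ ^ i / (Nat.factorial i) *
        (lincGamma (L + i) v / Real.Gamma (L + i)) ∧ ξ ^ i / (Nat.factorial i) *
        (lincGamma (L + i) v / Real.Gamma (L + i)) ≤ ξ ^ i / (Nat.factorial i) * v ^ L := by
    intro i
    obtain ⟨h1, h2⟩ := lincGamma_bounds (L + i) v (by omega) hv hv1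
    push_cast at h1 h2
    have hpos : (0:ℝ) < L + i := by
      have : (1:ℝ) ≤ L := by exact_mod_cast hL
      positivity
    have hG : 0 < Real.Gamma (L + i) := Real.Gamma_pos_of_pos hpos
    have h0 : 0 ≤ lincGamma (L + i) v := le_trans (by positivity) h1
    refine ⟨by positivity, ?_⟩
    apply mul_le_mul_of_nonneg_left _ (by positivity)
    rw [div_le_iff₀ hG]
    refine h2.trans ?_
    rw [div_le_iff₀ hpos, mul_assoc, mul_comm (Real.Gamma _), ← Real.Gamma_add_one hpos.ne']
    have hf : Real.Gamma ((L:ℝ) + i + 1) = ((L + i).factorial : ℝ) := by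
      rw [← Real.Gamma_nat_eq_factorial]; push_cast; rfl
    rw [hf]
    have h3 : (1:ℝ) ≤ ((L + i).factorial : ℝ) := by exact_mod_cast Nat.factorial_pos _
    have h4 : v ^ (L + i) ≤ v ^ L := pow_le_pow_of_le_one hv.le hv1 (by omega)
    have h5 : 0 ≤ v ^ L := by positivity
    nlinarith
  have hE : HasSum (fun i : ℕ => ξ ^ i / (Nat.factorial i) * v ^ L) (Real.exp ξ * v ^ L) := by
    apply HasSum.mul_right
    rw [Real.exp_eq_exp_ℝ]
    exact NormedSpace.expSeries_div_hasSum_exp ξ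
  have hS := Summable.of_nonneg_of_le (fun i => (key i).1) (fun i => (key i).2) hE.summable
  constructor
  · refine le_trans ?_ (hS.le_tsum 0 (fun i _ => (key i).1))
    obtain ⟨h1, -⟩ := lincGamma_bounds L v hL hv hv1
    have hG : 0 < Real.Gamma L := Real.Gamma_pos_of_pos (by exact_mod_cast hL)
    simp only [pow_zero, Nat.factorial_zero, Nat.cast_one, div_one, one_mul, Nat.cast_zero,
      add_zero]
    rw [le_div_iff₀ hG]
    refine le_trans (le_of_eq ?_) h1
    field_simp
  · rw [← hE.tsum_eq]
    exact hS.tsum_le_tsum (fun i => (key i).2) hE.summable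

/-- The HARQ-CC scheme achieves full diversity order `L`: with outage probability
`P(ρ) = e^{-ξ} ∑_{i=0}^∞ (ξ^i/i!) γ(L+i, (2^R−1)/(ρb))/Γ(L+i)`,
one has `−log P(ρ)/log ρ → L` as `ρ → ∞`. -/
theorem harqCC_diversity_order (ξ b R : ℝ) (hξ : 0 ≤ ξ) (hb : 0 < b) (hR : 0 < R)
    (L : ℕ) (hL : 1 ≤ L)
    (P : ℝ → ℝ)
    (hP : ∀ ρ, 0 < ρ → P ρ = Real.exp (-ξ) *
      ∑' i : ℕ, ξ ^ i / (Nat.factorial i) *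
        (lincGamma (L + i) (((2 : ℝ) ^ R - 1) / (ρ * b)) / Real.Gamma (L + i))) :
    Tendsto (fun ρ : ℝ => -Real.log (P ρ) / Real.log ρ) atTop (nhds (L : ℝ)) := by
  have h2R : 0 < (2:ℝ) ^ R - 1 := by
    have := Real.one_lt_rpow (by norm_num : (1:ℝ) < 2) hR
    linarith
  set c : ℝ := ((2:ℝ) ^ R - 1) / b with hc
  have hc0 : 0 < c := by positivity
  have hLpos : (0:ℝ) < L := by exact_mod_cast hL
  have hG : 0 < Real.Gamma L := Real.Gamma_pos_of_pos hLpos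
  set k : ℝ := Real.exp (-ξ) * (Real.exp (-1) / L / Real.Gamma L) * c ^ L with hk
  have hk0 : 0 < k := by positivity
  have hK0 : 0 < c ^ L := by positivity
  have hlim : ∀ a : ℝ, Tendsto (fun ρ : ℝ => (L:ℝ) - a / Real.log ρ) atTop (nhds (L:ℝ)) := by
    intro a
    simpa using (tendsto_const_nhds (x := (L:ℝ))).sub
      (Real.tendsto_log_atTop.const_div_atTop a)
  have hb2 : ∀ᶠ ρ : ℝ in atTop, 1 < ρ ∧ k / ρ ^ L ≤ P ρ ∧ P ρ ≤ c ^ L / ρ ^ L := by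
    filter_upwards [eventually_gt_atTop 1, eventually_ge_atTop c] with ρ h1 hcρ
    have hρ : 0 < ρ := by linarith
    have hv : ((2:ℝ) ^ R - 1) / (ρ * b) = c / ρ := by rw [hc]; field_simp
    obtain ⟨hl, hu⟩ := sum_bounds ξ (c / ρ) hξ L hL (by positivity) ((div_le_one hρ).mpr hcρ)
    rw [hP ρ hρ, hv]
    refine ⟨h1, ?_, ?_⟩
    · refine le_trans (le_of_eq ?_) (mul_le_mul_of_nonneg_left hl (Real.exp_pos _).le)
      clear_value k c; rw [hk, div_pow]; ring
    · refine (mul_le_mul_of_nonneg_left hu (Real.exp_pos _).le).trans (le_of_eq ?_)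
      rw [← mul_assoc, ← Real.exp_add, div_pow]; simp
  refine tendsto_of_tendsto_of_tendsto_of_le_of_le' (hlim (Real.log (c ^ L)))
    (hlim (Real.log k)) ?_ ?_
  · filter_upwards [hb2] with ρ ⟨h1, hl, hu⟩
    have hρ : 0 < ρ := by linarith
    have hlog : 0 < Real.log ρ := Real.log_pos h1
    have hPp : 0 < P ρ := lt_of_lt_of_le (by positivity) hl
    have := Real.log_le_log hPp hu
    rw [Real.log_div hK0.ne' (by positivity), Real.log_pow ρ] at this
    rw [le_div_iff₀ hlog, sub_mul, div_mul_cancel₀ _ hlog.ne']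
    linarith
  · filter_upwards [hb2] with ρ ⟨h1, hl, hu⟩
    have hρ : 0 < ρ := by linarith
    have hlog : 0 < Real.log ρ := Real.log_pos h1
    have := Real.log_le_log (by positivity) hl
    rw [Real.log_div hk0.ne' (by positivity), Real.log_pow ρ] at this
    rw [div_le_iff₀ hlog, sub_mul, div_mul_cancel₀ _ hlog.ne']
    linarith
end

section
/- Let L ≥ 1 be an integer and c > 0. Then the function ξ ↦ e^{-ξ} · Σ_{i=0}^∞ (ξ^i/i!) · γ(L+i, c)/Γ(L+i) is strictly decreasing on [0, ∞). -/
theorem lincGamma_rec (s c : ℝ) (hs : 1 ≤ s) :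
    lincGamma (s + 1) c = s * lincGamma s c - c ^ s * Real.exp (-c) := by
  have hs0 : s ≠ 0 := by linarith
  have hc1 : Continuous fun t : ℝ => t ^ s * Real.exp (-t) := by
    exact (Real.continuous_rpow_const (by linarith)).mul (by fun_prop)
  have hc2 : Continuous fun t : ℝ => t ^ (s - 1) * Real.exp (-t) := by
    exact (Real.continuous_rpow_const (by linarith)).mul (by fun_prop)
  have h := intervalIntegral.integral_eq_sub_of_hasDerivAt (a := 0) (b := c)
    (f := fun t : ℝ => t ^ s * Real.exp (-t))
    (f' := fun t : ℝ => s * (t ^ (s - 1) * Real.exp (-t)) - t ^ s * Real.exp (-t))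
    (fun t _ => by
      have h1 := Real.hasDerivAt_rpow_const (x := t) (p := s) (Or.inr hs)
      have h2 := (hasDerivAt_neg t).exp
      exact (h1.mul h2).congr_deriv (by ring))
    (((hc2.const_mul s).sub hc1).intervalIntegrable _ _)
  rw [intervalIntegral.integral_sub ((hc2.const_mul s).intervalIntegrable _ _)
    (hc1.intervalIntegrable _ _), intervalIntegral.integral_const_mul] at h
  simp only [Real.zero_rpow hs0] at h
  unfold lincGamma
  simp only [add_sub_cancel_right]
  linarith

theorem poisson_hasDerivAt (a : ℕ → ℝ) (A : ℝ) (hA : ∀ n, |a n| ≤ A) (x : ℝ) :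
    HasDerivAt (fun x : ℝ => ∑' n : ℕ, x ^ n / (Nat.factorial n) * a n)
      (∑' n : ℕ, x ^ n / (Nat.factorial n) * a (n + 1)) x := by
  have key : ∀ (y : ℝ) (n : ℕ), ((n + 1 : ℕ) : ℝ) * y ^ (n + 1 - 1) / (Nat.factorial (n + 1))
      = y ^ n / (Nat.factorial n) := by
    intro y n
    have : (Nat.factorial n : ℝ) ≠ 0 := by positivity
    rw [Nat.factorial_succ]
    push_cast
    field_simp
  have hA0 : 0 ≤ A := (abs_nonneg _).trans (hA 0)
  set R := |x| + 1 with hR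
  have hR0 : 0 < R := by positivity
  have hu : Summable fun n : ℕ => (n : ℝ) * R ^ (n - 1) / (Nat.factorial n) * A := by
    apply Summable.mul_right
    rw [← summable_nat_add_iff 1]
    simp only [key]
    exact Real.summable_pow_div_factorial R
  have hb : ∀ (n : ℕ) (y : ℝ), y ∈ Metric.ball (0 : ℝ) R →
      ‖(n : ℝ) * y ^ (n - 1) / (Nat.factorial n) * a n‖
        ≤ (n : ℝ) * R ^ (n - 1) / (Nat.factorial n) * A := by
    intro n y hy
    have hy' : |y| ≤ R := by
      rw [mem_ball_zero_iff, Real.norm_eq_abs] at hy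
      exact hy.le
    rw [Real.norm_eq_abs, abs_mul, abs_div, abs_mul, abs_pow, Nat.abs_cast, Nat.abs_cast]
    gcongr
    exact hA n
  have hx : x ∈ Metric.ball (0 : ℝ) R := by
    rw [mem_ball_zero_iff, Real.norm_eq_abs]
    linarith
  have h := hasDerivAt_tsum_of_isPreconnected (g := fun (n : ℕ) (x : ℝ) =>
      x ^ n / (Nat.factorial n) * a n)
    (g' := fun (n : ℕ) (y : ℝ) => (n : ℝ) * y ^ (n - 1) / (Nat.factorial n) * a n)
    hu Metric.isOpen_ball (convex_ball (0 : ℝ) R).isPreconnected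
    (fun n y _ => ((hasDerivAt_pow n y).div_const _).mul_const _) hb
    (Metric.mem_ball_self hR0)
    (summable_of_ne_finset_zero (s := {0}) (by
      intro n hn
      simp only [Finset.mem_singleton] at hn
      simp [hn])) hx
  refine h.congr_deriv ?_
  have hs : Summable fun n : ℕ => (n : ℝ) * x ^ (n - 1) / (Nat.factorial n) * a n :=
    Summable.of_norm_bounded hu (fun n => hb n x hx)
  rw [hs.tsum_eq_zero_add]
  simp only [key]
  simp

theorem poisson_summable (a : ℕ → ℝ) (A : ℝ) (hA : ∀ n, |a n| ≤ A) (x : ℝ) :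
    Summable fun n : ℕ => x ^ n / (Nat.factorial n) * a n := by
  refine Summable.of_norm_bounded ((Real.summable_pow_div_factorial |x|).mul_right A) ?_
  intro n
  rw [Real.norm_eq_abs, abs_mul, abs_div, abs_pow, Nat.abs_cast]
  gcongr
  exact hA n

theorem poisson_strictAntiOn (a : ℕ → ℝ) (h0 : ∀ n, 0 ≤ a n) (ha : ∀ n, a (n + 1) < a n) :
    StrictAntiOn (fun x : ℝ => Real.exp (-x) * ∑' n : ℕ, x ^ n / (Nat.factorial n) * a n)
      (Set.Ici 0) := by
  have hA : ∀ n, |a n| ≤ a 0 := fun n => by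
    rw [abs_of_nonneg (h0 n)]
    exact antitone_nat_of_succ_le (fun n => (ha n).le) (Nat.zero_le n)
  have hd : ∀ x : ℝ, HasDerivAt
      (fun x : ℝ => Real.exp (-x) * ∑' n : ℕ, x ^ n / (Nat.factorial n) * a n)
      (Real.exp (-x) * ((∑' n : ℕ, x ^ n / (Nat.factorial n) * a (n + 1)) -
        ∑' n : ℕ, x ^ n / (Nat.factorial n) * a n)) x := by
    intro x
    exact ((hasDerivAt_neg x).exp.mul (poisson_hasDerivAt a (a 0) hA x)).congr_deriv (by ring)
  refine strictAntiOn_of_deriv_neg (convex_Ici 0)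
    (fun x _ => (hd x).continuousAt.continuousWithinAt) ?_
  intro x hx
  rw [interior_Ici, Set.mem_Ioi] at hx
  rw [(hd x).deriv]
  refine mul_neg_of_pos_of_neg (Real.exp_pos _) (sub_neg.2 ?_)
  refine Summable.tsum_lt_tsum (i := 0) (fun n => ?_) ?_
    (poisson_summable (fun n => a (n + 1)) (a 0) (fun n => hA (n + 1)) x)
    (poisson_summable a (a 0) hA x)
  · have := (ha n).le
    dsimp only
    gcongr
  · simpa using ha 0

/-- The non-central χ² CDF series `ξ ↦ e^{-ξ} ∑_{i=0}^∞ (ξ^i/i!) γ(L+i, c)/Γ(L+i)`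
is strictly decreasing in the non-centrality parameter `ξ` on `[0, ∞)`. -/
theorem outage_strictAntiOn (L : ℕ) (hL : 1 ≤ L) (c : ℝ) (hc : 0 < c) :
    StrictAntiOn
      (fun ξ : ℝ => Real.exp (-ξ) *
        ∑' i : ℕ, ξ ^ i / (Nat.factorial i) * (lincGamma (L + i) c / Real.Gamma (L + i)))
      (Set.Ici 0) := by
  have hL' : (1 : ℝ) ≤ L := by exact_mod_cast hL
  refine poisson_strictAntiOn (fun i : ℕ => lincGamma (L + i) c / Real.Gamma (L + i)) ?_ ?_
  · intro n
    have hp : (0 : ℝ) < L + n := by positivity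
    refine div_nonneg ?_ (Real.Gamma_pos_of_pos hp).le
    refine intervalIntegral.integral_nonneg hc.le (fun t ht => ?_)
    exact mul_nonneg (Real.rpow_nonneg ht.1 _) (Real.exp_pos _).le
  · intro n
    have hs : (1 : ℝ) ≤ L + n := by
      have : (0 : ℝ) ≤ n := by positivity
      linarith
    have hp : (0 : ℝ) < L + n := by linarith
    have hG := Real.Gamma_pos_of_pos hp
    have hq : 0 < c ^ ((L : ℝ) + n) * Real.exp (-c) := by positivity
    push_cast
    rw [← add_assoc, Real.Gamma_add_one hp.ne', lincGamma_rec _ _ hs,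
      div_lt_div_iff₀ (by positivity) hG]
    nlinarith [mul_pos hq hG]
end

section
/- Let L ≥ 1 be an integer, ξ₀ ≥ 0, and c > 0. Then e^{-Lξ₀} · Σ_{i=0}^∞ ((Lξ₀)^i/i!) · γ(L+i, c)/Γ(L+i) ≤ (e^{-ξ₀} · Σ_{i=0}^∞ (ξ₀^i/i!) · γ(1+i, c)/Γ(1+i))^L. -/
/-- Auxiliary integral with natural powers. -/
noncomputable def auxG (c : ℝ) (n : ℕ) : ℝ := ∫ t in (0:ℝ)..c, t ^ n * Real.exp (-t)

/-- Poisson tail. -/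
noncomputable def auxT (c : ℝ) : ℕ → ℝ
  | 0 => 1
  | n + 1 => auxG c n / (Nat.factorial n)

/-- Poisson weight. -/
noncomputable def auxP (c : ℝ) (n : ℕ) : ℝ := c ^ n * Real.exp (-c) / (Nat.factorial n)

lemma auxInt (c : ℝ) (n : ℕ) :
    IntervalIntegrable (fun t : ℝ => t ^ n * Real.exp (-t)) MeasureTheory.volume 0 c :=
  Continuous.intervalIntegrable (by fun_prop) _ _

lemma auxG_pos {c : ℝ} (hc : 0 < c) (n : ℕ) : 0 < auxG c n := by
  apply intervalIntegral.intervalIntegral_pos_of_pos_on (auxInt c n) _ hc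
  intro x hx
  have := hx.1
  positivity

lemma auxG_succ_le {c : ℝ} (hc : 0 < c) (n : ℕ) : auxG c (n+1) ≤ c * auxG c n := by
  unfold auxG
  rw [← intervalIntegral.integral_const_mul]
  apply intervalIntegral.integral_mono_on hc.le (auxInt c (n+1)) ((auxInt c n).const_mul c)
  intro x hx
  have h0 := hx.1
  have h : 0 ≤ x ^ n * Real.exp (-x) := by positivity
  have := mul_le_mul_of_nonneg_right hx.2 h
  calc _ = x * (x ^ n * Real.exp (-x)) := by ring
    _ ≤ _ := this

lemma auxG_zero (c : ℝ) : auxG c 0 = 1 - Real.exp (-c) := by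
  unfold auxG
  have h : ∀ x ∈ Set.uIcc 0 c, HasDerivAt (fun x : ℝ => - Real.exp (-x))
      (x ^ 0 * Real.exp (-x)) x := by
    intro x _
    have := ((hasDerivAt_neg x).exp).neg
    exact this.congr_deriv (by ring)
  rw [intervalIntegral.integral_eq_sub_of_hasDerivAt h (auxInt c 0)]
  simp
  ring

lemma auxG_succ (c : ℝ) (n : ℕ) :
    auxG c (n+1) = (n+1) * auxG c n - c ^ (n+1) * Real.exp (-c) := by
  have h : ∀ x ∈ Set.uIcc 0 c, HasDerivAt (fun x : ℝ => x ^ (n+1) * Real.exp (-x))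
      (((n:ℝ)+1) * (x ^ n * Real.exp (-x)) - x ^ (n+1) * Real.exp (-x)) x := by
    intro x _
    have := (hasDerivAt_pow (n+1) x).mul ((hasDerivAt_neg x).exp)
    exact this.congr_deriv (by push_cast; ring)
  have h2 := intervalIntegral.integral_eq_sub_of_hasDerivAt h
    (((auxInt c n).const_mul _).sub (auxInt c (n+1)))
  rw [intervalIntegral.integral_sub ((auxInt c n).const_mul _) (auxInt c (n+1)),
    intervalIntegral.integral_const_mul] at h2
  simp at h2
  unfold auxG
  linarith

lemma auxT_pos {c : ℝ} (hc : 0 < c) (n : ℕ) : 0 < auxT c n := by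
  cases n with
  | zero => simp [auxT]
  | succ n =>
    have := auxG_pos hc n
    simp only [auxT]
    positivity

lemma auxT_succ (c : ℝ) (n : ℕ) : auxT c (n+1) = auxT c n - auxP c n := by
  cases n with
  | zero => simp [auxT, auxP, auxG_zero]
  | succ n =>
    simp only [auxT, auxP, auxG_succ, Nat.factorial_succ]
    push_cast
    field_simp

lemma auxT_le_one {c : ℝ} (hc : 0 < c) (n : ℕ) : auxT c n ≤ 1 := by
  induction n with
  | zero => simp [auxT]
  | succ n ih =>
    have : 0 ≤ auxP c n := by unfold auxP; positivity
    rw [auxT_succ]; linarith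

lemma auxT_logconc {c : ℝ} (hc : 0 < c) (n : ℕ) :
    auxT c (n+2) * auxT c n ≤ auxT c (n+1) * auxT c (n+1) := by
  have h1 := auxT_succ c n
  have h2 := auxT_succ c (n+1)
  have key : auxT c (n+2) * auxP c n ≤ auxP c (n+1) * auxT c (n+1) := by
    have := auxG_succ_le hc n
    have hk : 0 ≤ c ^ n * Real.exp (-c) / ((Nat.factorial (n+1)) * (Nat.factorial n) : ℝ) := by
      positivity
    have := mul_le_mul_of_nonneg_right this hk
    simp only [auxT, auxP]
    calc _ = _ := by ring
      _ ≤ _ := this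
      _ = _ := by ring
  have e0 : auxT c n = auxT c (n+1) + auxP c n := by linarith
  have e2 : auxP c (n+1) = auxT c (n+1) - auxT c (n+2) := by
    have : auxT c (n+2) = auxT c (n+1) - auxP c (n+1) := h2
    linarith
  rw [e2] at key
  rw [e0]
  nlinarith

lemma auxT_submul {c : ℝ} (hc : 0 < c) (m n : ℕ) : auxT c (m+n) ≤ auxT c m * auxT c n := by
  have anti : Antitone (fun n => auxT c (n+1) / auxT c n) := by
    apply antitone_nat_of_succ_le
    intro n
    rw [div_le_div_iff₀ (auxT_pos hc _) (auxT_pos hc _)]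
    exact auxT_logconc hc n
  induction n with
  | zero => simp [auxT]
  | succ n ih =>
    have hr := anti (Nat.le_add_left n m)
    simp only at hr
    have p1 := auxT_pos hc (m+n)
    have p2 := auxT_pos hc n
    have p3 := auxT_pos hc (m+n+1)
    have p4 := auxT_pos hc m
    calc auxT c (m+(n+1)) = auxT c (m+n) * (auxT c (m+n+1) / auxT c (m+n)) := by
          field_simp; rfl
      _ ≤ (auxT c m * auxT c n) * (auxT c (n+1) / auxT c n) :=
          mul_le_mul ih hr (by positivity) (by positivity)
      _ = _ := by field_simp

lemma auxT_eq (c : ℝ) (n : ℕ) (hn : 1 ≤ n) :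
    lincGamma n c / Real.Gamma n = auxT c n := by
  obtain ⟨k, rfl⟩ : ∃ k, n = k + 1 := ⟨n - 1, by omega⟩
  push_cast
  rw [Real.Gamma_nat_eq_factorial]
  simp [auxT, lincGamma, auxG]

/-- The Poisson mixture. -/
noncomputable def auxF (c : ℝ) (L : ℕ) (x : ℝ) : ℝ :=
  ∑' i : ℕ, x ^ i / (Nat.factorial i) * auxT c (L + i)

lemma auxF_summable {c : ℝ} (hc : 0 < c) (L : ℕ) {x : ℝ} (hx : 0 ≤ x) :
    Summable (fun i : ℕ => x ^ i / (Nat.factorial i) * auxT c (L + i)) := by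
  refine Summable.of_nonneg_of_le (fun i => ?_) (fun i => ?_) (Real.summable_pow_div_factorial x)
  · have := auxT_pos hc (L+i)
    positivity
  · exact mul_le_of_le_one_right (by positivity) (auxT_le_one hc _)

lemma auxF_nonneg {c : ℝ} (hc : 0 < c) (L : ℕ) {x : ℝ} (hx : 0 ≤ x) : 0 ≤ auxF c L x := by
  apply tsum_nonneg
  intro i
  have := auxT_pos hc (L+i)
  positivity

lemma auxF_mul {c : ℝ} (hc : 0 < c) (L M : ℕ) {x y : ℝ} (hx : 0 ≤ x) (hy : 0 ≤ y) :
    auxF c (L+M) (x+y) ≤ auxF c L x * auxF c M y := by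
  have s1 := (auxF_summable hc L hx).norm
  have s2 := (auxF_summable hc M hy).norm
  unfold auxF
  rw [tsum_mul_tsum_eq_tsum_sum_antidiagonal_of_summable_norm s1 s2]
  refine Summable.tsum_le_tsum ?_ (auxF_summable hc _ (by positivity))
    (summable_norm_sum_mul_antidiagonal_of_summable_norm s1 s2).of_norm
  intro n
  rw [(Commute.all x y).add_pow', Finset.sum_div, Finset.sum_mul]
  apply Finset.sum_le_sum
  rintro ⟨k, l⟩ hkl
  have hkl : k + l = n := by simpa using hkl
  subst hkl
  have hch : ((k+l).choose k : ℝ) * k.factorial * l.factorial = (k+l).factorial := by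
    rw [Nat.choose_symm_add]
    exact_mod_cast Nat.add_choose_mul_factorial_mul_factorial k l
  have hT := auxT_submul hc (L+k) (M+l)
  rw [show L + k + (M + l) = L + M + (k + l) by ring] at hT
  have hk : 0 ≤ x ^ k / (k.factorial : ℝ) * (y ^ l / (l.factorial : ℝ)) := by positivity
  calc _ = x ^ k / (k.factorial : ℝ) * (y ^ l / (l.factorial : ℝ)) * auxT c (L + M + (k+l)) := by
        rw [← hch]
        have : ((k+l).choose k : ℝ) ≠ 0 := by
          exact_mod_cast (Nat.choose_pos (Nat.le_add_right k l)).ne'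
        simp only [nsmul_eq_mul]
        field_simp
    _ ≤ _ := mul_le_mul_of_nonneg_left hT hk
    _ = _ := by ring

lemma auxF_pow {c : ℝ} (hc : 0 < c) {x : ℝ} (hx : 0 ≤ x) (L : ℕ) (hL : 1 ≤ L) :
    auxF c L (L * x) ≤ auxF c 1 x ^ L := by
  induction L, hL using Nat.le_induction with
  | base => simp
  | succ n hn ih =>
    have h := auxF_mul hc n 1 (x := n * x) (y := x) (by positivity) hx
    have e : ((n+1 : ℕ) : ℝ) * x = n * x + x := by push_cast; ring
    rw [e, pow_succ]
    exact h.trans (mul_le_mul_of_nonneg_right ih (auxF_nonneg hc 1 hx))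

/-- HARQ-CC always outperforms Type-I HARQ: the HARQ-CC outage probability (left side,
with `ξ = Lξ₀`) is at most the Type-I HARQ outage probability after `L` rounds (right side). -/
theorem harqCC_le_typeI (L : ℕ) (hL : 1 ≤ L) (ξ₀ : ℝ) (hξ₀ : 0 ≤ ξ₀) (c : ℝ) (hc : 0 < c) :
    Real.exp (-(L * ξ₀)) *
        ∑' i : ℕ, (L * ξ₀) ^ i / (Nat.factorial i) * (lincGamma (L + i) c / Real.Gamma (L + i))
      ≤ (Real.exp (-ξ₀) *
          ∑' i : ℕ, ξ₀ ^ i / (Nat.factorial i) * (lincGamma (1 + i) c / Real.Gamma (1 + i))) ^ L := by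
  have h1 : ∀ i : ℕ, lincGamma (L + i) c / Real.Gamma (L + i) = auxT c (L + i) := by
    intro i
    have := auxT_eq c (L + i) (by omega)
    push_cast at this
    exact this
  have h2 : ∀ i : ℕ, lincGamma (1 + i) c / Real.Gamma (1 + i) = auxT c (1 + i) := by
    intro i
    have := auxT_eq c (1 + i) (by omega)
    push_cast at this
    exact this
  simp only [h1, h2]
  rw [mul_pow, ← Real.exp_nat_mul, mul_neg]
  exact mul_le_mul_of_nonneg_left (auxF_pow hc hξ₀ L hL) (Real.exp_pos _).le
end

section
/- For every a ≥ 0 and s > 0, lim_{x → ∞} Σ_{i=0}^∞ (a^i/i!) · γ(s+i, x)/Γ(s+i) = e^{a}; equivalently, the function x ↦ e^{-a} Σ_{i=0}^∞ (a^i/i!) γ(s+i, x)/Γ(s+i) tends to 1 as x → ∞. -/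
open Filter

open MeasureTheory in
theorem lincGamma_aux (s : ℝ) (hs : 0 < s) :
    Tendsto (fun x : ℝ => lincGamma s x / Real.Gamma s) atTop (nhds 1) ∧
    ∀ x : ℝ, 0 ≤ x → ‖lincGamma s x / Real.Gamma s‖ ≤ 1 := by
  have hG := Real.Gamma_pos_of_pos hs
  have hint : IntegrableOn (fun t : ℝ => t ^ (s - 1) * Real.exp (-t)) (Set.Ioi 0) := by
    simpa only [mul_comm] using Real.GammaIntegral_convergent hs
  have hval : ∫ t in Set.Ioi (0:ℝ), t ^ (s - 1) * Real.exp (-t) = Real.Gamma s := by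
    rw [Real.Gamma_eq_integral hs]
    simp only [mul_comm]
  have hpos : ∀ t ∈ Set.Ioi (0:ℝ), 0 ≤ t ^ (s - 1) * Real.exp (-t) := fun t ht =>
    mul_nonneg (Real.rpow_nonneg (le_of_lt ht) _) (Real.exp_pos _).le
  constructor
  · have h := intervalIntegral_tendsto_integral_Ioi 0 hint tendsto_id
    rw [hval] at h
    have h2 := h.div_const (Real.Gamma s)
    rw [div_self hG.ne'] at h2
    exact h2
  · intro x hx
    have h0 : 0 ≤ lincGamma s x := by
      unfold lincGamma
      rw [intervalIntegral.integral_of_le hx]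
      exact setIntegral_nonneg measurableSet_Ioc fun t ht => hpos t ht.1
    rw [Real.norm_of_nonneg (div_nonneg h0 hG.le), div_le_one hG, ← hval]
    unfold lincGamma
    rw [intervalIntegral.integral_of_le hx]
    refine setIntegral_mono_set hint ?_ (Set.Ioc_subset_Ioi_self).eventuallyLE
    exact (ae_restrict_iff' measurableSet_Ioi).2 (Eventually.of_forall hpos)

/-- The CDF series tends to one: for `a ≥ 0` and `s > 0`,
`∑_{i=0}^∞ (a^i/i!) γ(s+i, x)/Γ(s+i) → e^a` as `x → ∞`. -/
theorem cdf_series_tendsto (a s : ℝ) (ha : 0 ≤ a) (hs : 0 < s) :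
    Tendsto
      (fun x : ℝ => ∑' i : ℕ, a ^ i / (Nat.factorial i) * (lincGamma (s + i) x / Real.Gamma (s + i)))
      atTop (nhds (Real.exp a)) := by
  have hpos : ∀ i : ℕ, 0 < s + (i : ℝ) := fun i => by positivity
  have he : Real.exp a = ∑' i : ℕ, a ^ i / (Nat.factorial i : ℝ) := by
    rw [Real.exp_eq_exp_ℝ, NormedSpace.exp_eq_tsum_div]
  rw [he]
  refine tendsto_tsum_of_dominated_convergence (Real.summable_pow_div_factorial a) ?_ ?_
  · intro i
    simpa using (lincGamma_aux _ (hpos i)).1.const_mul (a ^ i / (Nat.factorial i : ℝ))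
  · filter_upwards [eventually_ge_atTop 0] with x hx i
    have h0 : 0 ≤ a ^ i / (Nat.factorial i : ℝ) := by positivity
    rw [norm_mul, Real.norm_of_nonneg h0]
    exact mul_le_of_le_one_right h0 ((lincGamma_aux _ (hpos i)).2 x hx)
end
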